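/- arXiv:q-alg/9506028 — 8 statements merged into one kernel-verified Lean document; each statement's English description precedes it below -/
import Mathlib

section
/- Let q, M be real numbers with 0 < q < 1 and M > 0, and let m be a nonzero real number. Then every sequence (a_r)_{r∈ℕ} of nonnegative real numbers satisfying the recursion a_{r+1} = a_r · (M² − q^{−2r−2} m²) · q² for all r ∈ ℕ must vanish at some index, i.e. there exists r ∈ ℕ with a_r = 0. -/
/-- Let `q, M` be real numbers with `0 < q < 1` and `M > 0`, and let `m` be a
nonzero real number. Then every sequence `(a r)` of nonnegative real numbers satisfying the
recursion `a (r+1) = a r * (M² − q^(−2r−2) m²) * q²` for all `r` must vanish at some index. -/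
theorem exists_zero_of_momentum_norm_recursion
    (q M m : ℝ) (hq0 : 0 < q) (hq1 : q < 1) (hM : 0 < M) (hm : m ≠ 0)
    (a : ℕ → ℝ) (hpos : ∀ r, 0 ≤ a r)
    (hrec : ∀ r : ℕ, a (r + 1) = a r * (M ^ 2 - q ^ (-2 * (r : ℤ) - 2) * m ^ 2) * q ^ 2) :
    ∃ r, a r = 0 := by
  -- As `q ^ (2 * n) → 0`, some factor `M² - q^(-2n-2) m²` is negative; there `a n > 0` would
  -- force `a (n + 1) < 0`.
  have hm2 : 0 < m ^ 2 := by positivity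
  obtain ⟨n, hn⟩ := exists_pow_lt_of_lt_one (div_pos hm2 (pow_pos hM 2))
    (pow_lt_one₀ hq0.le hq1 two_ne_zero)
  refine ⟨n, ?_⟩
  by_contra hne
  have han : 0 < a n := lt_of_le_of_ne (hpos n) (Ne.symm hne)
  have hz : q ^ (-2 * (n : ℤ) - 2) = ((q ^ 2) ^ (n + 1))⁻¹ := by
    rw [← pow_mul, ← zpow_natCast, ← zpow_neg]
    congr 1
    push_cast
    ring
  have hlt : (q ^ 2) ^ (n + 1) < m ^ 2 / M ^ 2 :=
    (pow_le_pow_of_le_one (by positivity) (pow_le_one₀ hq0.le hq1.le) n.le_succ).trans_lt hn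
  have hfac : M ^ 2 - q ^ (-2 * (n : ℤ) - 2) * m ^ 2 < 0 := by
    rw [hz, sub_neg, inv_mul_eq_div, lt_div_iff₀ (by positivity), mul_comm]
    exact (lt_div_iff₀ (by positivity)).1 hlt
  have hneg := mul_neg_of_neg_of_pos (mul_neg_of_pos_of_neg han hfac) (pow_pos hq0 2)
  rw [← hrec n] at hneg
  exact (hpos (n + 1)).not_gt hneg
end

section
/- Let q, μ, ω be real numbers with 0 < q < 1, μ > 0, and ω ∈ ℝ. Then every sequence (a_m)_{m∈ℕ} of nonnegative real numbers satisfying the recursion a_{m+1} = a_m · ( ω q^{−m} μ^{−1} + q^{1/2} (1 − μ^{−2} q^{−2m}) / ((q² − 1)(q − 1)) ) for all m ∈ ℕ must vanish at some index, i.e. there exists m ∈ ℕ with a_m = 0. -/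
/-!
With `c = q^(1/2) / ((q² − 1)(q − 1)) > 0` and `y = q^(−m) / μ`, the factor of the recursion is
`c + ω y − c y²`, which is negative as soon as `y > 1 + |ω| / c`. Since `q < 1`, some `m` achieves
this; then `a m > 0` would give `a (m + 1) < 0`.
-/

/-- Let `q, μ, ω` be real with `0 < q < 1`, `μ > 0`, `ω ∈ ℝ`. Then every
sequence `(a m)` of nonnegative reals satisfying
`a (m+1) = a m * (ω q^(−m) μ⁻¹ + q^(1/2) (1 − μ^(−2) q^(−2m)) / ((q²−1)(q−1)))`
for all `m` must vanish at some index. -/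
theorem exists_zero_of_angular_norm_recursion
    (q μ ω : ℝ) (hq0 : 0 < q) (hq1 : q < 1) (hμ : 0 < μ)
    (a : ℕ → ℝ) (hpos : ∀ m, 0 ≤ a m)
    (hrec : ∀ m : ℕ, a (m + 1) =
      a m * (ω * q ^ (-(m : ℤ)) * μ⁻¹ +
        q ^ ((1 : ℝ) / 2) * (1 - (μ ^ 2)⁻¹ * q ^ (-2 * (m : ℤ))) / ((q ^ 2 - 1) * (q - 1)))) :
    ∃ m, a m = 0 := by
  have hD : 0 < (q ^ 2 - 1) * (q - 1) :=
    mul_pos_of_neg_of_neg (by nlinarith) (by linarith)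
  obtain ⟨c, hc⟩ : ∃ c, c = q ^ ((1 : ℝ) / 2) / ((q ^ 2 - 1) * (q - 1)) := ⟨_, rfl⟩
  have hc0 : 0 < c := hc ▸ div_pos (Real.rpow_pos_of_pos hq0 _) hD
  obtain ⟨m, hm⟩ := pow_unbounded_of_one_lt (μ * (1 + |ω| / c)) ((one_lt_inv₀ hq0).2 hq1)
  obtain ⟨y, hy⟩ : ∃ y, y = q⁻¹ ^ m * μ⁻¹ := ⟨_, rfl⟩
  have hy1 : 1 + |ω| / c < y := by
    rw [hy, ← div_eq_mul_inv, lt_div_iff₀ hμ]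
    linarith
  have hfactor : ω * q ^ (-(m : ℤ)) * μ⁻¹ +
      q ^ ((1 : ℝ) / 2) * (1 - (μ ^ 2)⁻¹ * q ^ (-2 * (m : ℤ))) / ((q ^ 2 - 1) * (q - 1))
      = c + ω * y - c * y ^ 2 := by
    have h1 : q ^ (-(m : ℤ)) = q⁻¹ ^ m := by simp
    have h2 : q ^ (-2 * (m : ℤ)) = (q⁻¹ ^ m) ^ 2 := by
      rw [show (-2 * (m : ℤ)) = -(m : ℤ) + -(m : ℤ) by ring, zpow_add₀ hq0.ne', h1, sq]
    rw [h1, h2, hc, hy, inv_pow μ 2 |>.symm]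
    ring
  have hneg : c + ω * y - c * y ^ 2 < 0 := by
    have hone : 1 < y := by
      have := div_nonneg (abs_nonneg ω) hc0.le
      linarith
    have hcy : c + |ω| < c * y := by
      have h := mul_lt_mul_of_pos_left hy1 hc0
      rwa [mul_add, mul_one, mul_div_cancel₀ _ hc0.ne'] at h
    nlinarith [mul_lt_mul_of_pos_right hcy (by linarith : 0 < y),
      mul_le_mul_of_nonneg_right (le_abs_self ω) (by linarith : 0 ≤ y)]
  refine ⟨m, le_antisymm ?_ (hpos m)⟩
  by_contra! h
  have hnext := hpos (m + 1)
  rw [hrec m, hfactor] at hnext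
  exact absurd hnext (not_le.2 (mul_neg_of_pos_of_neg h hneg))
end

section
/- The operators satisfy the q-commutation relations of the momentum subalgebra: P₋₁ P₀ = q P₀ P₋₁ and P₀ P₁ = q P₁ P₀ as linear operators on V. -/
/-!
Both relations are checked on the canonical basis. There `P₀` is diagonal, with eigenvalue
proportional to `q ^ (2 + π₀ + π₁)`, while `P₁` and `P₋₁` shift `π₀` by `+1` and `-1` and fix
`π₁`. Moving `P₀` past such a shift therefore changes its eigenvalue by one factor of `q`; the
remaining coefficients are common to both sides. When `π₀ = 0`, `P₋₁` kills the vector and both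
sides vanish.
-/

/- The irreducible Hilbert-space representation of highest weight `w` of the q-Euclidean
algebra `U_q(e³)` (Theorem 3 of the paper): `S` is the index set of the q-lattice,
`V` the space of finitely supported functions `S → ℂ` with canonical basis `e`,
and `P0, P1, Pm1, Lam, LamInv, K, Lp, Lm` realize the generators
`p⁰, p¹, p⁻¹, Λ, Λ⁻¹, k¹, L^{01}, L^{−1,0}`. -/

noncomputable section

/-- The q-lattice index set `S = {(π₀,π₁,j) ∈ ℤ³ : π₀ ≥ 0, j ≤ π₀}`. -/
structure SIdx : Type where
  π0 : ℤ
  π1 : ℤ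
  j : ℤ
  hπ0 : 0 ≤ π0
  hj : j ≤ π0

instance : DecidableEq SIdx := fun _ _ => Classical.dec _

/-- `V`: finitely supported functions `S → ℂ`. -/
abbrev V : Type := SIdx →₀ ℂ

/-- The canonical basis vector `e_{π₀,π₁,j}`. -/
def e (s : SIdx) : V := Finsupp.single s 1

/-- The linear operator on `V` determined by its values on the canonical basis. -/
def opOf (g : SIdx → V) : V →ₗ[ℂ] V :=
  Finsupp.lsum ℂ fun s => LinearMap.toSpanSingleton ℂ V (g s)

/-- `P₀ e_{π₀,π₁,j} = ε M (1+q⁻¹)^(1/2) q^(2+π₀+π₁) e_{π₀,π₁,j}`. -/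
def P0 (q M ε : ℝ) : V →ₗ[ℂ] V :=
  opOf fun s => ((ε * M * Real.sqrt (1 + q⁻¹) * q ^ (2 + s.π0 + s.π1) : ℝ) : ℂ) • e s

/-- `P₁ e_{π₀,π₁,j} = M (1−q^(2π₀+2))^(1/2) q^(1+π₁) e_{π₀+1,π₁,j+1}`. -/
def P1 (q M : ℝ) : V →ₗ[ℂ] V :=
  opOf fun s => ((M * Real.sqrt (1 - q ^ (2 * s.π0 + 2)) * q ^ (1 + s.π1) : ℝ) : ℂ) •
    e ⟨s.π0 + 1, s.π1, s.j + 1, by have h0 := s.hπ0; have h1 := s.hj; omega, by have h0 := s.hπ0; have h1 := s.hj; omega⟩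

/-- `P₋₁ e_{π₀,π₁,j} = M (1−q^(2π₀))^(1/2) q^(1/2+π₁) e_{π₀−1,π₁,j−1}` (zero if `π₀ = 0`). -/
def Pm1 (q M : ℝ) : V →ₗ[ℂ] V :=
  opOf fun s =>
    if h : 0 < s.π0 then
      ((M * Real.sqrt (1 - q ^ (2 * s.π0)) * q ^ ((1 : ℝ) / 2 + (s.π1 : ℝ)) : ℝ) : ℂ) •
        e ⟨s.π0 - 1, s.π1, s.j - 1, by have h0 := s.hπ0; have h1 := s.hj; omega, by have h0 := s.hπ0; have h1 := s.hj; omega⟩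
    else 0

/-- `Λ e_{π₀,π₁,j} = e_{π₀,π₁+1,j}`. -/
def Lam : V →ₗ[ℂ] V := opOf fun s => e ⟨s.π0, s.π1 + 1, s.j, s.hπ0, s.hj⟩

/-- `Λ⁻¹ e_{π₀,π₁,j} = e_{π₀,π₁−1,j}`. -/
def LamInv : V →ₗ[ℂ] V := opOf fun s => e ⟨s.π0, s.π1 - 1, s.j, s.hπ0, s.hj⟩

/-- `K e_{π₀,π₁,j} = q^(2j+w) e_{π₀,π₁,j}`. -/
def K (q w : ℝ) : V →ₗ[ℂ] V :=
  opOf fun s => ((q ^ (2 * (s.j : ℝ) + w) : ℝ) : ℂ) • e s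

/-- `L⁺ e_{π₀,π₁,j} = q^(−3/2−π₀) [(1+q^(π₀−j−w))(1−q^(π₀−j))/((q⁻¹−1)(1−q))]^(1/2)
    e_{π₀,π₁,j+1}` (zero if `j = π₀`). -/
def Lp (q w : ℝ) : V →ₗ[ℂ] V :=
  opOf fun s =>
    if h : s.j < s.π0 then
      ((q ^ (-(3 : ℝ) / 2 - (s.π0 : ℝ)) *
          Real.sqrt ((1 + q ^ ((s.π0 : ℝ) - (s.j : ℝ) - w)) *
            (1 - q ^ ((s.π0 : ℝ) - (s.j : ℝ))) / ((q⁻¹ - 1) * (1 - q))) : ℝ) : ℂ) •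
        e ⟨s.π0, s.π1, s.j + 1, s.hπ0, by have h0 := s.hπ0; have h1 := s.hj; omega⟩
    else 0

/-- `L⁻ e_{π₀,π₁,j} = q^(−π₀) [(1+q^(π₀−j+1−w))(1−q^(π₀−j+1))/((q⁻¹−1)(1−q))]^(1/2)
    e_{π₀,π₁,j−1}`. -/
def Lm (q w : ℝ) : V →ₗ[ℂ] V :=
  opOf fun s =>
    ((q ^ (-(s.π0 : ℝ)) *
        Real.sqrt ((1 + q ^ ((s.π0 : ℝ) - (s.j : ℝ) + 1 - w)) *
          (1 - q ^ ((s.π0 : ℝ) - (s.j : ℝ) + 1)) / ((q⁻¹ - 1) * (1 - q))) : ℝ) : ℂ) •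
      e ⟨s.π0, s.π1, s.j - 1, s.hπ0, by have h0 := s.hπ0; have h1 := s.hj; omega⟩

lemma opOf_e (g : SIdx → V) (s : SIdx) : opOf g (e s) = g s := by
  simp [opOf, e]

lemma opOf_hom_ext {f g : V →ₗ[ℂ] V} (h : ∀ s, f (e s) = g (e s)) : f = g :=
  Finsupp.lhom_ext' fun s => LinearMap.ext_ring (h s)

/-- The momentum operators satisfy the q-commutation relations
`P₋₁ P₀ = q P₀ P₋₁` and `P₀ P₁ = q P₁ P₀`. -/
theorem momentum_q_commutation
    (q M ε w : ℝ) (hq0 : 0 < q) (hq1 : q < 1) (hM : 0 < M)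
    (hε : ε = 1 ∨ ε = -1) (hw : 0 ≤ w) :
    Pm1 q M ∘ₗ P0 q M ε = (q : ℂ) • (P0 q M ε ∘ₗ Pm1 q M) ∧
    P0 q M ε ∘ₗ P1 q M = (q : ℂ) • (P1 q M ∘ₗ P0 q M ε) := by
  have hq : q ≠ 0 := hq0.ne'
  constructor
  · refine opOf_hom_ext fun s => ?_
    simp only [LinearMap.comp_apply, LinearMap.smul_apply, P0, Pm1, opOf_e, map_smul]
    split_ifs with h
    · have hz : q ^ (2 + s.π0 + s.π1) = q * q ^ (2 + (s.π0 - 1) + s.π1) := by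
        rw [← zpow_one_add₀ hq]
        congr 1
        ring
      simp only [map_smul, opOf_e, smul_smul, hz]
      congr 1
      push_cast
      ring
    · simp
  · refine opOf_hom_ext fun s => ?_
    have hz : q ^ (2 + (s.π0 + 1) + s.π1) = q * q ^ (2 + s.π0 + s.π1) := by
      rw [← zpow_one_add₀ hq]
      congr 1
      ring
    simp only [LinearMap.comp_apply, LinearMap.smul_apply, P0, P1, opOf_e, map_smul, smul_smul, hz]
    congr 1
    push_cast
    ring
end
end

section
/- The squared-momentum operator (p·p)₁ := q^{1/2} P₋₁ P₁ + (1+q⁻¹)^{−1} P₀² acts diagonally on the basis of V, with (q^{1/2} P₋₁ P₁ + (1+q⁻¹)^{−1} P₀²) e_{π₀,π₁,j} = M² q^{2(1+π₁)} e_{π₀,π₁,j} for every (π₀,π₁,j) ∈ S. In particular its eigenvalues M² q^{2(1+π₁)}, π₁ ∈ ℤ, are strictly positive and form a discrete set accumulating only at 0. -/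
/-!
On a basis vector, `P₋₁ P₁` raises and then lowers `π₀` and `j`, so it is diagonal with entry
`M² (1 - q^(2π₀+2)) q^(3/2+2π₁)`, while `P₀²` has entry `M² (1+q⁻¹) q^(4+2π₀+2π₁)`, since `ε² = 1`.
In the combination `q^(1/2) P₋₁ P₁ + (1+q⁻¹)⁻¹ P₀²` the terms in `q^(2π₀)` cancel
(`momentum_coeff`), and `M² q^(2(1+π₁))` remains.

The eigenvalues form a strictly decreasing two-sided geometric sequence. The interval between the
two neighbours of an eigenvalue isolates it (`eq_of_mem_gap`), which gives discreteness, and every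
positive real lies in such an interval (`exists_gap`), so no positive real outside the set is a
limit point. The sequence tends to `0` as `π₁ → ∞`.
-/

/- The irreducible Hilbert-space representation of highest weight `w` of the q-Euclidean
algebra `U_q(e³)` (Theorem 3 of the paper): `S` is the index set of the q-lattice,
`V` the space of finitely supported functions `S → ℂ` with canonical basis `e`,
and `P0, P1, Pm1, Lam, LamInv, K, Lp, Lm` realize the generators
`p⁰, p¹, p⁻¹, Λ, Λ⁻¹, k¹, L^{01}, L^{−1,0}`. -/

noncomputable section

lemma Pm1_P1_e (q M : ℝ) (s : SIdx) :
    Pm1 q M (P1 q M (e s)) =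
      (((M * Real.sqrt (1 - q ^ (2 * s.π0 + 2)) * q ^ (1 + s.π1)) *
        (M * Real.sqrt (1 - q ^ (2 * s.π0 + 2)) * q ^ ((1 : ℝ) / 2 + (s.π1 : ℝ))) : ℝ) : ℂ) •
        e s := by
  have h0 := s.hπ0
  have h1 : 0 < s.π0 + 1 := by omega
  have h2 : 2 * (s.π0 + 1) = 2 * s.π0 + 2 := by ring
  rw [P1, opOf_e, map_smul, Pm1, opOf_e, dif_pos h1, smul_smul, ← Complex.ofReal_mul]
  simp only [add_sub_cancel_right, h2]

lemma P0_P0_e (q M ε : ℝ) (s : SIdx) :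
    P0 q M ε (P0 q M ε (e s)) =
      (((ε * M * Real.sqrt (1 + q⁻¹) * q ^ (2 + s.π0 + s.π1)) *
        (ε * M * Real.sqrt (1 + q⁻¹) * q ^ (2 + s.π0 + s.π1)) : ℝ) : ℂ) • e s := by
  rw [P0, opOf_e, map_smul, opOf_e, smul_smul, ← Complex.ofReal_mul]

/-- The diagonal entry of the squared momentum: the contributions depending on `π₀ = a` cancel. -/
lemma momentum_coeff (q M ε : ℝ) (hq0 : 0 < q) (hq1 : q < 1) (hε : ε = 1 ∨ ε = -1)
    (a b : ℤ) (ha : 0 ≤ a) :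
    q ^ ((1 : ℝ) / 2) * ((M * Real.sqrt (1 - q ^ (2 * a + 2)) * q ^ (1 + b)) *
        (M * Real.sqrt (1 - q ^ (2 * a + 2)) * q ^ ((1 : ℝ) / 2 + (b : ℝ)))) +
      (1 + q⁻¹)⁻¹ * ((ε * M * Real.sqrt (1 + q⁻¹) * q ^ (2 + a + b)) *
        (ε * M * Real.sqrt (1 + q⁻¹) * q ^ (2 + a + b))) = M ^ 2 * q ^ (2 * (1 + b)) := by
  have hne : q ≠ 0 := hq0.ne'
  have hε2 : ε * ε = 1 := by rcases hε with rfl | rfl <;> norm_num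
  have hpos : 0 < 1 + q⁻¹ := by positivity
  have hs1 : Real.sqrt (1 + q⁻¹) * Real.sqrt (1 + q⁻¹) = 1 + q⁻¹ := Real.mul_self_sqrt hpos.le
  have hle : q ^ (2 * a + 2) ≤ 1 := zpow_le_one₀ hq0 hq1.le (by omega)
  have hs2 : Real.sqrt (1 - q ^ (2 * a + 2)) * Real.sqrt (1 - q ^ (2 * a + 2)) =
      1 - q ^ (2 * a + 2) := Real.mul_self_sqrt (by linarith)
  have hr : q ^ ((1 : ℝ) / 2) * q ^ ((1 : ℝ) / 2 + (b : ℝ)) = q ^ (1 + b) := by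
    rw [← Real.rpow_add hq0, ← Real.rpow_intCast]
    congr 1
    push_cast
    ring
  have hx : q ^ (1 + b) * q ^ (1 + b) = q ^ (2 * (1 + b)) := by
    rw [← zpow_add₀ hne]; congr 1; ring
  have hy : q ^ (2 + a + b) * q ^ (2 + a + b) = q ^ (2 * a + 2) * q ^ (2 * (1 + b)) := by
    rw [← zpow_add₀ hne, ← zpow_add₀ hne]; congr 1; ring
  calc _ = M ^ 2 * (Real.sqrt (1 - q ^ (2 * a + 2)) * Real.sqrt (1 - q ^ (2 * a + 2))) *
            (q ^ (1 + b) * (q ^ ((1 : ℝ) / 2) * q ^ ((1 : ℝ) / 2 + (b : ℝ)))) +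
          (1 + q⁻¹)⁻¹ * (Real.sqrt (1 + q⁻¹) * Real.sqrt (1 + q⁻¹)) * (ε * ε) * M ^ 2 *
            (q ^ (2 + a + b) * q ^ (2 + a + b)) := by ring
    _ = _ := by
      rw [hr, hx, hy, hs1, hs2, hε2, inv_mul_cancel₀ hpos.ne']
      ring

lemma strictAnti_eigenvalue (q M : ℝ) (hq0 : 0 < q) (hq1 : q < 1) (hM : 0 < M) :
    StrictAnti fun n : ℤ => M ^ 2 * q ^ (2 * (1 + n)) := by
  intro m n hmn
  have h : q ^ (2 * (1 + n)) < q ^ (2 * (1 + m)) :=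
    zpow_lt_zpow_right_of_lt_one₀ hq0 hq1 (by omega)
  exact mul_lt_mul_of_pos_left h (by positivity)

/-- A strictly decreasing sequence indexed by `ℤ` takes only the value `f n` strictly between
`f (n + 1)` and `f (n - 1)`. -/
lemma eq_of_mem_gap {f : ℤ → ℝ} (hf : StrictAnti f) {m n : ℤ}
    (h : f m ∈ Set.Ioo (f (n + 1)) (f (n - 1))) : m = n := by
  have h1 := hf.lt_iff_gt.1 h.1
  have h2 := hf.lt_iff_gt.1 h.2
  omega

/-- Every positive real lies strictly between the two neighbours of some eigenvalue. -/
lemma exists_gap (q M : ℝ) (hq0 : 0 < q) (hq1 : q < 1) (hM : 0 < M) {x : ℝ} (hx : 0 < x) :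
    ∃ n : ℤ, x ∈ Set.Ioo (M ^ 2 * q ^ (2 * (1 + (n + 1)))) (M ^ 2 * q ^ (2 * (1 + (n - 1)))) := by
  have hM2 : 0 < M ^ 2 := by positivity
  have hy : 1 < (q ^ 2)⁻¹ := (one_lt_inv₀ (by positivity)).2 (by nlinarith)
  obtain ⟨k, hk1, hk2⟩ := exists_mem_Ioc_zpow (div_pos hx hM2) hy
  have hpow : ∀ k : ℤ, ((q ^ 2)⁻¹) ^ k = q ^ (-2 * k) := by
    intro k
    rw [zpow_mul]
    congr 1
  rw [hpow, lt_div_iff₀' hM2] at hk1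
  rw [hpow, div_le_iff₀' hM2] at hk2
  refine ⟨-k - 2, ?_, ?_⟩
  · convert hk1 using 3
    ring
  · refine hk2.trans_lt (mul_lt_mul_of_pos_left ?_ hM2)
    exact zpow_lt_zpow_right_of_lt_one₀ hq0 hq1 (by omega)

/-- The squared-momentum operator
`(p·p)₁ = q^(1/2) P₋₁ P₁ + (1+q⁻¹)⁻¹ P₀²` acts diagonally on the basis with eigenvalues
`M² q^(2(1+π₁))`; these eigenvalues are strictly positive and form a discrete set whose
only accumulation point is `0`. -/
theorem squared_momentum_diagonal
    (q M ε w : ℝ) (hq0 : 0 < q) (hq1 : q < 1) (hM : 0 < M)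
    (hε : ε = 1 ∨ ε = -1) (hw : 0 ≤ w) :
    (∀ s : SIdx,
      (((q ^ ((1 : ℝ) / 2) : ℝ) : ℂ) • (Pm1 q M ∘ₗ P1 q M) +
        (((1 + q⁻¹)⁻¹ : ℝ) : ℂ) • (P0 q M ε ∘ₗ P0 q M ε)) (e s) =
        ((M ^ 2 * q ^ (2 * (1 + s.π1)) : ℝ) : ℂ) • e s) ∧
    (∀ π₁ : ℤ, 0 < M ^ 2 * q ^ (2 * (1 + π₁))) ∧
    DiscreteTopology {x : ℝ | ∃ π₁ : ℤ, x = M ^ 2 * q ^ (2 * (1 + π₁))} ∧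
    closure {x : ℝ | ∃ π₁ : ℤ, x = M ^ 2 * q ^ (2 * (1 + π₁))} ⊆
      insert 0 {x : ℝ | ∃ π₁ : ℤ, x = M ^ 2 * q ^ (2 * (1 + π₁))} ∧
    (0 : ℝ) ∈ closure {x : ℝ | ∃ π₁ : ℤ, x = M ^ 2 * q ^ (2 * (1 + π₁))} := by
  have hanti := strictAnti_eigenvalue q M hq0 hq1 hM
  have hpos : ∀ n : ℤ, 0 < M ^ 2 * q ^ (2 * (1 + n)) := fun n => by positivity
  refine ⟨fun s => ?_, hpos, ?_, ?_, ?_⟩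
  · rw [LinearMap.add_apply, LinearMap.smul_apply, LinearMap.smul_apply, LinearMap.comp_apply,
      LinearMap.comp_apply, Pm1_P1_e, P0_P0_e, smul_smul, smul_smul, ← add_smul,
      ← Complex.ofReal_mul, ← Complex.ofReal_mul, ← Complex.ofReal_add,
      momentum_coeff q M ε hq0 hq1 hε s.π0 s.π1 s.hπ0]
  · rw [discreteTopology_subtype_iff']
    rintro _ ⟨n, rfl⟩
    refine ⟨Set.Ioo (M ^ 2 * q ^ (2 * (1 + (n + 1)))) (M ^ 2 * q ^ (2 * (1 + (n - 1)))),
      isOpen_Ioo, ?_⟩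
    apply Set.Subset.antisymm
    · rintro _ ⟨hx, m, rfl⟩
      rw [eq_of_mem_gap hanti hx]
      rfl
    · rintro _ rfl
      exact ⟨⟨hanti (lt_add_one n), hanti (sub_one_lt n)⟩, n, rfl⟩
  · intro x hx
    have hx0 : 0 ≤ x := by
      refine closure_minimal ?_ isClosed_Ici hx
      rintro _ ⟨n, rfl⟩
      exact (hpos n).le
    rcases hx0.eq_or_lt with rfl | hx0
    · exact Set.mem_insert _ _
    · right
      obtain ⟨n, hn⟩ := exists_gap q M hq0 hq1 hM hx0
      -- Near `x` the set has at most the eigenvalue of index `n`, and a singleton is closed.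
      have hcl := isOpen_Ioo.inter_closure ⟨hn, hx⟩
      have hsub : closure (Set.Ioo (M ^ 2 * q ^ (2 * (1 + (n + 1))))
          (M ^ 2 * q ^ (2 * (1 + (n - 1)))) ∩ {x : ℝ | ∃ π₁ : ℤ, x = M ^ 2 * q ^ (2 * (1 + π₁))}) ⊆
          {M ^ 2 * q ^ (2 * (1 + n))} := by
        refine closure_minimal ?_ isClosed_singleton
        rintro _ ⟨hy, m, rfl⟩
        rw [eq_of_mem_gap hanti hy]
        rfl
      exact ⟨n, hsub hcl⟩
  · have hq2 : Filter.Tendsto (fun n : ℕ => M ^ 2 * q ^ 2 * (q ^ 2) ^ n) Filter.atTop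
        (nhds (M ^ 2 * q ^ 2 * 0)) :=
      (tendsto_pow_atTop_nhds_zero_of_lt_one (by positivity) (by nlinarith)).const_mul _
    rw [mul_zero] at hq2
    refine mem_closure_of_tendsto hq2 (Filter.Eventually.of_forall fun n => ⟨(n : ℤ), ?_⟩)
    rw [zpow_mul, zpow_add₀ (by positivity), zpow_one, zpow_natCast, mul_assoc]
    norm_cast
end
end

section
/- Equip V with the sesquilinear inner product making the basis (e_{π₀,π₁,j}) orthonormal. Then for all u, v ∈ V: ⟨P₁ u, v⟩ = q^{1/2} ⟨u, P₋₁ v⟩, ⟨L⁺ u, v⟩ = q^{−3/2} ⟨u, L⁻ v⟩, ⟨P₀ u, v⟩ = ⟨u, P₀ v⟩, ⟨K u, v⟩ = ⟨u, K v⟩, and ⟨Λ u, v⟩ = ⟨u, Λ⁻¹ v⟩. That is, the representation is a *-representation realizing the conjugation relations (p¹)* = q^{1/2} p^{−1}, (L^{01})* = q^{−3/2} L^{−1,0}, (p⁰)* = p⁰, (k¹)* = k¹, Λ* = Λ⁻¹ of U_q(e³). -/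
/-!
On basis vectors, `⟨A e_s, e_t⟩ = c ⟨e_s, B e_t⟩` says that the conjugate of the `t`-coordinate of
`A e_s` is `c` times the `s`-coordinate of `B e_t`. By sesquilinearity this matrix identity extends
to all finitely supported vectors (`inn_opOf`), so each conjugation relation reduces to comparing
matrix entries. In all five cases both matrices have real entries supported on the graph of one
shift of the lattice; there the entries are compared using the laws of exponents, e.g.
`q^(1/2) q^(1/2+π₁) = q^(1+π₁)` for the pair `P₁, P₋₁`. The boundary conventions
(`P₋₁ e = 0` at `π₀ = 0`, `L⁺ e = 0` at `j = π₀`) match because there the shifted index is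
outside the lattice.
-/

/- The irreducible Hilbert-space representation of highest weight `w` of the q-Euclidean
algebra `U_q(e³)` (Theorem 3 of the paper): `S` is the index set of the q-lattice,
`V` the space of finitely supported functions `S → ℂ` with canonical basis `e`,
and `P0, P1, Pm1, Lam, LamInv, K, Lp, Lm` realize the generators
`p⁰, p¹, p⁻¹, Λ, Λ⁻¹, k¹, L^{01}, L^{−1,0}`. -/

noncomputable section

/-- The sesquilinear inner product on `V` making the canonical basis orthonormal
(antilinear in the first argument). -/
def inn (u v : V) : ℂ := Finsupp.sum u fun s c => (starRingEnd ℂ) c * v s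

attribute [ext] SIdx

lemma opOf_single (g : SIdx → V) (s : SIdx) (c : ℂ) :
    opOf g (Finsupp.single s c) = c • g s := by
  simp [opOf]

lemma inn_add_left (u u' v : V) : inn (u + u') v = inn u v + inn u' v := by
  unfold inn
  exact Finsupp.sum_add_index' (by simp) (by intros; simp [add_mul])

lemma inn_smul_left (c : ℂ) (u v : V) : inn (c • u) v = (starRingEnd ℂ) c * inn u v := by
  unfold inn
  rw [Finsupp.sum_smul_index' (by simp), Finsupp.mul_sum]
  simp [mul_assoc]

lemma inn_add_right (u v v' : V) : inn u (v + v') = inn u v + inn u v' := by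
  simp [inn, mul_add, Finsupp.sum_add]

lemma inn_zero_left (v : V) : inn 0 v = 0 := by simp [inn]

lemma inn_zero_right (u : V) : inn u 0 = 0 := by simp [inn]

lemma inn_single_left (s : SIdx) (c : ℂ) (v : V) :
    inn (Finsupp.single s c) v = (starRingEnd ℂ) c * v s := by
  simp [inn]

lemma inn_single_right (u : V) (t : SIdx) (d : ℂ) :
    inn u (Finsupp.single t d) = (starRingEnd ℂ) (u t) * d := by
  induction u using Finsupp.induction_linear with
  | zero => simp [inn_zero_left]
  | add u u' hu hu' => simp [inn_add_left, hu, hu', add_mul]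
  | single s c =>
    rw [inn_single_left]
    by_cases h : s = t
    · subst h; simp
    · simp [Finsupp.single_eq_of_ne h, Finsupp.single_eq_of_ne (Ne.symm h)]

/-- Adjointness up to the scalar `c` may be checked on matrix entries. -/
lemma inn_opOf (f g : SIdx → V) (c : ℂ) (h : ∀ s t, (starRingEnd ℂ) (f s t) = c * g t s)
    (u v : V) : inn (opOf f u) v = c * inn u (opOf g v) := by
  induction u using Finsupp.induction_linear with
  | zero => simp [inn_zero_left]
  | add u u' hu hu' => simp only [map_add, inn_add_left, hu, hu', mul_add]
  | single s a =>
    induction v using Finsupp.induction_linear with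
    | zero => simp [inn_zero_right]
    | add v v' hv hv' => simp only [map_add, inn_add_right, hv, hv', mul_add]
    | single t b =>
      rw [opOf_single, opOf_single, inn_smul_left, inn_single_right, inn_single_left, h]
      simp only [Finsupp.smul_apply, smul_eq_mul]
      ring

lemma e_apply (s t : SIdx) : e s t = if s = t then 1 else 0 := by
  simp only [e, Finsupp.single_apply]

lemma P1_Pm1 (q M : ℝ) (hq0 : 0 < q) (u v : V) :
    inn (P1 q M u) v = ((q ^ ((1 : ℝ) / 2) : ℝ) : ℂ) * inn u (Pm1 q M v) := by
  refine inn_opOf _ _ _ (fun s t => ?_) u v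
  have hs := s.hπ0
  by_cases h : t.π0 = s.π0 + 1 ∧ t.π1 = s.π1 ∧ t.j = s.j + 1
  · obtain ⟨h0, h1, h2⟩ := h
    have ht : 0 < t.π0 := by omega
    have hq : q ^ (1 + s.π1) = q ^ ((1 : ℝ) / 2) * q ^ ((1 : ℝ) / 2 + (s.π1 : ℝ)) := by
      rw [← Real.rpow_add hq0, ← Real.rpow_intCast]
      congr 1
      push_cast
      ring
    have hexp : 2 * (s.π0 + 1) = 2 * s.π0 + 2 := by ring
    rw [dif_pos ht]
    simp only [Finsupp.smul_apply, e_apply, SIdx.ext_iff, h0, h1, h2,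
      add_sub_cancel_right, and_self, if_true, smul_eq_mul, mul_one, Complex.conj_ofReal, hq, hexp]
    push_cast
    ring
  · have h' : ¬ (s.π0 + 1 = t.π0 ∧ s.π1 = t.π1 ∧ s.j + 1 = t.j) := by omega
    have h'' : ¬ (t.π0 - 1 = s.π0 ∧ t.π1 = s.π1 ∧ t.j - 1 = s.j) := by omega
    split_ifs <;> simp [e_apply, SIdx.ext_iff, h', h'']

lemma Lp_Lm (q w : ℝ) (hq0 : 0 < q) (u v : V) :
    inn (Lp q w u) v = ((q ^ (-(3 : ℝ) / 2) : ℝ) : ℂ) * inn u (Lm q w v) := by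
  refine inn_opOf _ _ _ (fun s t => ?_) u v
  have ht := t.hj
  by_cases h : t.π0 = s.π0 ∧ t.π1 = s.π1 ∧ t.j = s.j + 1
  · obtain ⟨h0, h1, h2⟩ := h
    have hs : s.j < s.π0 := by omega
    have hq : q ^ (-(3 : ℝ) / 2 - (s.π0 : ℝ)) = q ^ (-(3 : ℝ) / 2) * q ^ (-(s.π0 : ℝ)) := by
      rw [← Real.rpow_add hq0, sub_eq_add_neg]
    have hexp : (s.π0 : ℝ) - ((s.j + 1 : ℤ) : ℝ) + 1 = s.π0 - s.j := by
      push_cast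
      ring
    rw [dif_pos hs]
    simp only [Finsupp.smul_apply, e_apply, SIdx.ext_iff, h0, h1, h2,
      add_sub_cancel_right, and_self, if_true, smul_eq_mul, mul_one, Complex.conj_ofReal, hq, hexp]
    push_cast
    ring
  · have h' : ¬ (s.π0 = t.π0 ∧ s.π1 = t.π1 ∧ s.j + 1 = t.j) := by omega
    have h'' : ¬ (t.π0 = s.π0 ∧ t.π1 = s.π1 ∧ t.j - 1 = s.j) := by omega
    split_ifs <;> simp [e_apply, SIdx.ext_iff, h', h'']

/-- A diagonal operator with real eigenvalues is symmetric. -/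
lemma inn_diagonal (a : SIdx → ℝ) (u v : V) :
    inn (opOf (fun s => (a s : ℂ) • e s) u) v = inn u (opOf (fun s => (a s : ℂ) • e s) v) := by
  rw [inn_opOf _ (fun s => (a s : ℂ) • e s) 1 _ u v, one_mul]
  intro s t
  by_cases h : s = t
  · subst h; simp [e_apply]
  · simp [e_apply, h, Ne.symm h]

lemma Lam_LamInv (u v : V) : inn (Lam u) v = inn u (LamInv v) := by
  rw [← one_mul (inn u _)]
  refine inn_opOf _ _ _ (fun s t => ?_) u v
  have h : (s.π0 = t.π0 ∧ s.π1 + 1 = t.π1 ∧ s.j = t.j) ↔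
      (t.π0 = s.π0 ∧ t.π1 - 1 = s.π1 ∧ t.j = s.j) := by omega
  simp only [e_apply, SIdx.ext_iff, h]
  split_ifs <;> simp

/-- With respect to the inner product making the basis orthonormal,
the representation is a `*`-representation: `⟨P₁u,v⟩ = q^(1/2)⟨u,P₋₁v⟩`,
`⟨L⁺u,v⟩ = q^(−3/2)⟨u,L⁻v⟩`, `⟨P₀u,v⟩ = ⟨u,P₀v⟩`, `⟨Ku,v⟩ = ⟨u,Kv⟩`,
`⟨Λu,v⟩ = ⟨u,Λ⁻¹v⟩`. -/
theorem star_representation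
    (q M ε w : ℝ) (hq0 : 0 < q) (hq1 : q < 1) (hM : 0 < M)
    (hε : ε = 1 ∨ ε = -1) (hw : 0 ≤ w) :
    ∀ u v : V,
      inn (P1 q M u) v = ((q ^ ((1 : ℝ) / 2) : ℝ) : ℂ) * inn u (Pm1 q M v) ∧
      inn (Lp q w u) v = ((q ^ (-(3 : ℝ) / 2) : ℝ) : ℂ) * inn u (Lm q w v) ∧
      inn (P0 q M ε u) v = inn u (P0 q M ε v) ∧
      inn (K q w u) v = inn u (K q w v) ∧
      inn (Lam u) v = inn u (LamInv v) := by
  exact fun u v => ⟨P1_Pm1 q M hq0 u v, Lp_Lm q w hq0 u v, inn_diagonal _ u v,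
    inn_diagonal _ u v, Lam_LamInv u v⟩
end
end

section
/- The vector e_{0,0,0} is cyclic: the only linear subspace of V that contains e_{0,0,0} and is invariant under all six operators P₁, P₋₁, Λ, Λ⁻¹, L⁺, L⁻ is V itself. -/
/-! Every basis vector `e_{n,m,j}` is reached from `e_{0,0,0}` along the lattice by operators that
send basis vectors to nonzero multiples of basis vectors: powers of `Λ` or `Λ⁻¹` lead to
`e_{0,m,0}`, then `P₁ⁿ` leads to a nonzero multiple of `e_{n,m,n}`, and `n - j ≥ 0` applications of
`L⁻` lead to a nonzero multiple of `e_{n,m,j}`. The coefficients of `P₁` and `L⁻` do not vanish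
because `q ^ a < 1` for `a > 0` (`P1_coeff_ne_zero`, `Lm_coeff_ne_zero`). -/


/- The irreducible Hilbert-space representation of highest weight `w` of the q-Euclidean
algebra `U_q(e³)` (Theorem 3 of the paper): `S` is the index set of the q-lattice,
`V` the space of finitely supported functions `S → ℂ` with canonical basis `e`,
and `P0, P1, Pm1, Lam, LamInv, K, Lp, Lm` realize the generators
`p⁰, p¹, p⁻¹, Λ, Λ⁻¹, k¹, L^{01}, L^{−1,0}`. -/

noncomputable section

lemma mem_of_ofReal_smul_mem {W : Submodule ℂ V} {c : ℝ} (hc : c ≠ 0) {v : V}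
    (h : (c : ℂ) • v ∈ W) : v ∈ W :=
  (W.smul_mem_iff (Complex.ofReal_ne_zero.mpr hc)).mp h

lemma P1_coeff_ne_zero {q M : ℝ} (hq0 : 0 < q) (hq1 : q < 1) (hM : 0 < M) (s : SIdx) :
    M * Real.sqrt (1 - q ^ (2 * s.π0 + 2)) * q ^ (1 + s.π1) ≠ 0 := by
  have h0 := s.hπ0
  have h : q ^ (2 * s.π0 + 2) < 1 := (zpow_lt_one_iff_right_of_lt_one₀ hq0 hq1).mpr (by omega)
  have : 0 < Real.sqrt (1 - q ^ (2 * s.π0 + 2)) := Real.sqrt_pos.mpr (by linarith)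
  positivity

lemma Lm_coeff_ne_zero {q : ℝ} (w : ℝ) (hq0 : 0 < q) (hq1 : q < 1) (s : SIdx) :
    q ^ (-(s.π0 : ℝ)) *
        Real.sqrt ((1 + q ^ ((s.π0 : ℝ) - (s.j : ℝ) + 1 - w)) *
          (1 - q ^ ((s.π0 : ℝ) - (s.j : ℝ) + 1)) / ((q⁻¹ - 1) * (1 - q))) ≠ 0 := by
  have hj : (s.j : ℝ) ≤ s.π0 := by exact_mod_cast s.hj
  have h : q ^ ((s.π0 : ℝ) - (s.j : ℝ) + 1) < 1 :=
    Real.rpow_lt_one hq0.le hq1 (by linarith)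
  have h1 : 0 < 1 - q ^ ((s.π0 : ℝ) - (s.j : ℝ) + 1) := by linarith
  have h2 : 0 < q⁻¹ - 1 := by
    have := (one_lt_inv₀ hq0).mpr hq1
    linarith
  have h3 : 0 < 1 - q := by linarith
  have : 0 < Real.sqrt ((1 + q ^ ((s.π0 : ℝ) - (s.j : ℝ) + 1 - w)) *
      (1 - q ^ ((s.π0 : ℝ) - (s.j : ℝ) + 1)) / ((q⁻¹ - 1) * (1 - q))) :=
    Real.sqrt_pos.mpr (by positivity)
  positivity

/-- The highest-weight vector `e_{0,0,0}` is cyclic: the only linear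
subspace of `V` containing it and invariant under `P₁, P₋₁, Λ, Λ⁻¹, L⁺, L⁻` is `V`. -/
theorem highest_weight_vector_cyclic
    (q M ε w : ℝ) (hq0 : 0 < q) (hq1 : q < 1) (hM : 0 < M)
    (hε : ε = 1 ∨ ε = -1) (hw : 0 ≤ w) :
    ∀ W : Submodule ℂ V,
      e ⟨0, 0, 0, le_refl 0, le_refl 0⟩ ∈ W →
      (∀ v ∈ W, P1 q M v ∈ W) →
      (∀ v ∈ W, Pm1 q M v ∈ W) →
      (∀ v ∈ W, Lam v ∈ W) →
      (∀ v ∈ W, LamInv v ∈ W) →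
      (∀ v ∈ W, Lp q w v ∈ W) →
      (∀ v ∈ W, Lm q w v ∈ W) →
      W = ⊤ := by
  intro W h0 hP1 _ hLam hLamInv _ hLm
  have step1 : ∀ m : ℤ, e ⟨0, m, 0, le_refl 0, le_refl 0⟩ ∈ W := by
    intro m
    induction m using Int.induction_on with
    | zero => exact h0
    | succ i ih =>
      have := hLam _ ih
      rwa [Lam, opOf_e] at this
    | pred i ih =>
      have := hLamInv _ ih
      rwa [LamInv, opOf_e] at this
  have step2 : ∀ (m : ℤ) (n : ℕ), e ⟨n, m, n, by omega, le_refl _⟩ ∈ W := by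
    intro m n
    induction n with
    | zero => exact step1 m
    | succ n ih =>
      have := hP1 _ ih
      rw [P1, opOf_e] at this
      exact mem_of_ofReal_smul_mem
        (P1_coeff_ne_zero hq0 hq1 hM ⟨n, m, n, by omega, le_refl _⟩) this
  have step3 : ∀ (m : ℤ) (n k : ℕ), e ⟨n, m, n - k, by omega, by omega⟩ ∈ W := by
    intro m n k
    induction k with
    | zero => simpa using step2 m n
    | succ k ih =>
      have := hLm _ ih
      rw [Lm, opOf_e] at this
      have := mem_of_ofReal_smul_mem
        (Lm_coeff_ne_zero w hq0 hq1 ⟨n, m, n - k, by omega, by omega⟩) this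
      convert this using 3
      push_cast
      ring
  have hall : ∀ s : SIdx, e s ∈ W := by
    rintro ⟨n, m, j, hn, hj⟩
    convert step3 m n.toNat (n - j).toNat using 3 <;> omega
  rw [eq_top_iff]
  intro v _
  induction v using Finsupp.induction_linear with
  | zero => exact W.zero_mem
  | add f g hf hg => exact W.add_mem (hf trivial) (hg trivial)
  | single s c =>
    have := W.smul_mem c (hall s)
    simpa [e] using this
end
end

section
/- Let M > 0 and μ > 0 be real numbers and let f : (0,∞) → ℝ be continuous. For q ∈ (0,1) set a(q) = ⌊log_{q²}(μ/M²)⌋ and α(q,ν) = (ν (q^{−2} − 1))^{−1/2} for ν > 0. Then the limit as q → 1 from below of α(q,μ) · ∫ f(ν) α(q,ν) dν, taken over the interval ν ∈ (M² q^{2a(q)+2}, M² q^{2a(q)}], equals f(μ). That is, the rescaled q-lattice eigenvectors form a delta-convergent family as q → 1⁻. -/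
/-!
Write `b = M² q^(2a(q))`, so the domain of integration is `(b q², b]`, and the definition of `a(q)`
as an integer part says exactly that `b q² < μ ≤ b`; hence both endpoints tend to `μ`.
Since `α(q,μ) α(q,ν) = q² / (1 - q²) · (√(μ ν))⁻¹` and the interval has length `b (1 - q²)`,
the quantity equals `b q²` times the average of `g ν = f ν / √(μ ν)` over the interval. As `g` is
continuous at `μ`, the average tends to `g μ = f μ / μ` by the fundamental theorem of calculus,
and `b q²` tends to `μ`.
-/

open MeasureTheory

/-- The average of `g` over `[u, v]` tends to `g x` when both endpoints tend to `x`. -/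
lemma tendsto_average_of_endpoints {ι : Type*} {l : Filter ι} {g : ℝ → ℝ} {x : ℝ}
    {u v : ι → ℝ} (hg : ContinuousOn g (Set.Ioi 0)) (hx : 0 < x)
    (hu : Filter.Tendsto u l (nhds x)) (hv : Filter.Tendsto v l (nhds x))
    (huv : ∀ᶠ i in l, u i < v i) :
    Filter.Tendsto (fun i => (∫ t in u i..v i, g t) / (v i - u i)) l (nhds (g x)) := by
  have hc : ContinuousAt g x := hg.continuousAt (Ioi_mem_nhds hx)
  have hm : StronglyMeasurableAtFilter g (nhds x) volume :=
    hg.stronglyMeasurableAtFilter isOpen_Ioi x hx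
  have h := intervalIntegral.integral_sub_linear_isLittleO_of_tendsto_ae
    (a := x) hm (hc.tendsto.mono_left inf_le_left) hu hv
  have h2 := h.tendsto_div_nhds_zero.add_const (g x)
  rw [zero_add] at h2
  refine h2.congr' ?_
  filter_upwards [huv] with i hi
  have : v i - u i ≠ 0 := by linarith
  simp only [smul_eq_mul, Pi.sub_apply]
  field_simp
  ring

/-- The defining inequalities of the integer part: `μ` lies in the interval
`(M² q^(2a+2), M² q^(2a)]`. The order is reversed because the base `q²` is less than `1`. -/
lemma mem_qInterval {M μ q : ℝ} (hM : 0 < M) (hμ : 0 < μ) (h0 : 0 < q) (h1 : q < 1) :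
    μ ∈ Set.Ioc (M ^ 2 * q ^ (2 * ⌊Real.logb (q ^ 2) (μ / M ^ 2)⌋ + 2))
      (M ^ 2 * q ^ (2 * ⌊Real.logb (q ^ 2) (μ / M ^ 2)⌋)) := by
  have hM2 : 0 < M ^ 2 := by positivity
  have hq2 : 0 < q ^ 2 := by positivity
  have hq21 : q ^ 2 < 1 := by nlinarith
  have hd : 0 < μ / M ^ 2 := by positivity
  set L := Real.logb (q ^ 2) (μ / M ^ 2) with hL
  have hpow : (q ^ 2) ^ L = μ / M ^ 2 := Real.rpow_logb hq2 hq21.ne hd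
  have hz : ∀ n : ℤ, q ^ (2 * n) = (q ^ 2) ^ (n : ℝ) := fun n => by
    rw [Real.rpow_intCast, zpow_mul]; norm_cast
  have e : 2 * ⌊L⌋ + 2 = 2 * (⌊L⌋ + 1) := by ring
  have hμe : μ = M ^ 2 * (q ^ 2) ^ L := by rw [hpow]; field_simp
  constructor
  · rw [e, hz, hμe]
    refine mul_lt_mul_of_pos_left (Real.rpow_lt_rpow_of_exponent_gt hq2 hq21 ?_) hM2
    push_cast
    exact Int.lt_floor_add_one L
  · rw [hz]
    nth_rewrite 1 [hμe]
    exact mul_le_mul_of_nonneg_left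
      (Real.rpow_le_rpow_of_exponent_ge hq2 hq21.le (Int.floor_le L)) hM2.le

/-- Let `M > 0`, `μ > 0`, and let `f` be continuous on `(0,∞)`. With
`a(q) = ⌊log_{q²}(μ/M²)⌋` and `α(q,ν) = (ν(q⁻²−1))^(−1/2)`, the limit as `q → 1⁻` of
`α(q,μ) ∫_{(M²q^(2a(q)+2), M²q^(2a(q))]} f(ν) α(q,ν) dν` equals `f(μ)`:
the rescaled q-lattice eigenvectors form a delta-convergent family. -/
theorem delta_convergence_one_dim
    (M μ : ℝ) (hM : 0 < M) (hμ : 0 < μ)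
    (f : ℝ → ℝ) (hf : ContinuousOn f (Set.Ioi 0)) :
    Filter.Tendsto
      (fun q : ℝ =>
        (Real.sqrt (μ * (q ^ (-2 : ℤ) - 1)))⁻¹ *
          ∫ ν in Set.Ioc (M ^ 2 * q ^ (2 * ⌊Real.logb (q ^ 2) (μ / M ^ 2)⌋ + 2))
              (M ^ 2 * q ^ (2 * ⌊Real.logb (q ^ 2) (μ / M ^ 2)⌋)),
            f ν * (Real.sqrt (ν * (q ^ (-2 : ℤ) - 1)))⁻¹)
      (nhdsWithin 1 (Set.Ioo 0 1)) (nhds (f μ)) := by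
  set b : ℝ → ℝ := fun q => M ^ 2 * q ^ (2 * ⌊Real.logb (q ^ 2) (μ / M ^ 2)⌋) with hb
  have hlow : ∀ q : ℝ, 0 < q →
      M ^ 2 * q ^ (2 * ⌊Real.logb (q ^ 2) (μ / M ^ 2)⌋ + 2) = b q * q ^ 2 := fun q hq => by
    rw [zpow_add₀ hq.ne', ← mul_assoc]; norm_cast
  have hmem : ∀ q ∈ Set.Ioo (0 : ℝ) 1, b q * q ^ 2 < μ ∧ μ ≤ b q := fun q hq => by
    have h := mem_qInterval hM hμ hq.1 hq.2
    rw [hlow q hq.1] at h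
    exact h
  have hIoo : ∀ᶠ q in nhdsWithin (1 : ℝ) (Set.Ioo 0 1), q ∈ Set.Ioo (0 : ℝ) 1 :=
    self_mem_nhdsWithin
  have hq2 : Filter.Tendsto (fun q : ℝ => q ^ 2) (nhdsWithin 1 (Set.Ioo 0 1)) (nhds 1) := by
    have : Filter.Tendsto (fun q : ℝ => q ^ 2) (nhds 1) (nhds (1 ^ 2)) :=
      (continuous_pow 2).tendsto 1
    rw [one_pow] at this
    exact this.mono_left nhdsWithin_le_nhds
  -- `μ ≤ b q < μ / q²` squeezes the upper endpoint.
  have hbt : Filter.Tendsto b (nhdsWithin 1 (Set.Ioo 0 1)) (nhds μ) := by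
    have hup : Filter.Tendsto (fun q : ℝ => μ / q ^ 2) (nhdsWithin 1 (Set.Ioo 0 1)) (nhds μ) := by
      simpa [div_eq_mul_inv] using (hq2.inv₀ one_ne_zero).const_mul μ
    refine tendsto_of_tendsto_of_tendsto_of_le_of_le' tendsto_const_nhds hup ?_ ?_
    · filter_upwards [hIoo] with q hq using (hmem q hq).2
    · filter_upwards [hIoo] with q hq
      rw [le_div_iff₀ (pow_pos hq.1 2)]
      exact (hmem q hq).1.le
  have hlt : Filter.Tendsto (fun q => b q * q ^ 2) (nhdsWithin 1 (Set.Ioo 0 1)) (nhds μ) := by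
    simpa using hbt.mul hq2
  have hlen : ∀ q ∈ Set.Ioo (0 : ℝ) 1, b q * q ^ 2 < b q := fun q hq =>
    (hmem q hq).1.trans_le (hmem q hq).2
  have hg : ContinuousOn (fun ν => f ν * (√(μ * ν))⁻¹) (Set.Ioi 0) := by
    refine hf.mul (ContinuousOn.inv₀ (by fun_prop) fun ν hν => ?_)
    exact (Real.sqrt_pos.2 (mul_pos hμ hν)).ne'
  have key := hlt.mul (tendsto_average_of_endpoints hg hμ hlt hbt (hIoo.mono hlen))
  have hval : μ * (f μ * (√(μ * μ))⁻¹) = f μ := by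
    rw [Real.sqrt_mul_self hμ.le]; field_simp
  rw [hval] at key
  refine key.congr' ?_
  filter_upwards [hIoo] with q hq
  have hq0 := hq.1
  have hl := hlen q hq
  have hbpos : 0 < b q := hμ.trans_le (hmem q hq).2
  have hlpos : 0 < b q * q ^ 2 := by positivity
  have h1q : 0 < 1 - q ^ 2 := by nlinarith [hq.2]
  have hc : q ^ (-2 : ℤ) - 1 = (1 - q ^ 2) / q ^ 2 := by
    rw [zpow_neg]
    norm_cast
    field_simp
  have hcpos : 0 < (1 - q ^ 2) / q ^ 2 := by positivity
  rw [hlow q hq0, hc, intervalIntegral.integral_of_le hl.le, ← integral_const_mul,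
    mul_div_assoc', mul_div_right_comm, ← integral_const_mul]
  refine setIntegral_congr_fun measurableSet_Ioc fun ν hν => ?_
  have hν0 : 0 < ν := hlpos.trans hν.1
  have hcoef : b q * q ^ 2 / (b q - b q * q ^ 2) = ((1 - q ^ 2) / q ^ 2)⁻¹ := by
    have : b q - b q * q ^ 2 = b q * (1 - q ^ 2) := by ring
    rw [this]
    field_simp
  simp only [hcoef]
  set c := (1 - q ^ 2) / q ^ 2
  rw [Real.sqrt_mul hμ.le, Real.sqrt_mul hμ.le, Real.sqrt_mul hν0.le]
  have hcs : c⁻¹ = (√c)⁻¹ * (√c)⁻¹ := by rw [← mul_inv, Real.mul_self_sqrt hcpos.le]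
  rw [hcs]
  simp only [mul_inv]
  ring
end

section
/- Let n ≥ 1, M > 0, and let 0 < μ₁ ≤ μ₂ ≤ … ≤ μₙ ≤ M² be real numbers; set μ_{n+1} := M². Let f : (0,∞)ⁿ → ℝ be continuous. For q ∈ (0,1) define integers a_i(q) = ⌊log_{q²}(μ_i/μ_{i+1})⌋ for i = 1,…,n, the set B_q = { ν ∈ (0,∞)ⁿ : ν_{i+1} q^{2a_i(q)+2} < ν_i ≤ ν_{i+1} q^{2a_i(q)} for all i = 1,…,n, where ν_{n+1} := M² }, and α(q,ν) = ∏_{i=1}^n (ν_i (q^{−2} − 1))^{−1/2}. Then the limit as q → 1 from below of α(q,μ) · ∫_{B_q} α(q,ν) f(ν) dν (Lebesgue integral over B_q ⊂ ℝⁿ) equals f(μ₁,…,μₙ). -/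
/-!
The weight `∏ i, (ν i)⁻¹` is the Haar density of the multiplicative group `(0,∞)ⁿ`. The box `B_q`
prescribes the ratios `ν i / ν (i+1)` to lie in the intervals `(q^(2aᵢ+2), q^(2aᵢ)]`, so by Fubini
(integrating out the first coordinate and inducting on `n`, `lintegral_qBox`) its mass for this
weight is exactly `(-2 log q)ⁿ`, independently of the labels `aᵢ`.

The integrand is `α(q,μ) α(q,ν) f(ν) = (q⁻² - 1)⁻ⁿ h(ν) ∏ i, (ν i)⁻¹` with
`h(ν) = f(ν) ∏ i, √(ν i / μ i)`, which is continuous at `μ` with `h(μ) = f(μ)`. Two points of `B_q`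
agree up to a factor `q^(2n)` in each coordinate (`qBox_close`) and `μ ∈ B_q` (`mem_Bq_self`), so
`B_q` shrinks to `μ`. Hence the quantity is `(h(μ) + o(1)) (-2 log q / (q⁻² - 1))ⁿ`, and
`-2 log q / (q⁻² - 1) → 1`.
-/

open MeasureTheory

noncomputable section

/-- `ν_{i+1}`, with the convention `ν_{n+1} = M²`. -/
def nxt (n : ℕ) (M : ℝ) (ν : Fin n → ℝ) (i : Fin n) : ℝ :=
  if h : (i : ℕ) + 1 < n then ν ⟨(i : ℕ) + 1, h⟩ else M ^ 2

/-- The q-lattice labels `a_i(q) = ⌊log_{q²}(μ_i/μ_{i+1})⌋`. -/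
def lab (n : ℕ) (M q : ℝ) (μ : Fin n → ℝ) (i : Fin n) : ℤ :=
  ⌊Real.logb (q ^ 2) (μ i / nxt n M μ i)⌋

/-- The q-box `B_q = {ν : ν_{i+1} q^(2aᵢ(q)+2) < νᵢ ≤ ν_{i+1} q^(2aᵢ(q))}` (with
`ν_{n+1} = M²`). -/
def Bq (n : ℕ) (M q : ℝ) (μ : Fin n → ℝ) : Set (Fin n → ℝ) :=
  {ν | ∀ i, nxt n M ν i * q ^ (2 * lab n M q μ i + 2) < ν i ∧
        ν i ≤ nxt n M ν i * q ^ (2 * lab n M q μ i)}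

/-- The normalization `α(q,ν) = ∏ᵢ (νᵢ(q⁻²−1))^(−1/2)`. -/
def alph (n : ℕ) (q : ℝ) (ν : Fin n → ℝ) : ℝ :=
  ∏ i, (Real.sqrt (ν i * (q ^ (-2 : ℤ) - 1)))⁻¹

/-- The box of points with `ν (i+1) * c i < ν i ≤ ν (i+1) * d i` (and last neighbour `M²`), for
arbitrary bounds `c`, `d`. -/
def qBox (n : ℕ) (M : ℝ) (c d : Fin n → ℝ) : Set (Fin n → ℝ) :=
  {ν | ∀ i, nxt n M ν i * c i < ν i ∧ ν i ≤ nxt n M ν i * d i}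

/-- The right neighbour of a new first coordinate put in front of `ν`: `ν 0`, or `M²` if `ν` is
empty. -/
def headNxt (n : ℕ) (M : ℝ) (ν : Fin n → ℝ) : ℝ :=
  if h : 0 < n then ν ⟨0, h⟩ else M ^ 2

lemma nxt_cons_zero (n : ℕ) (M x : ℝ) (ν : Fin n → ℝ) :
    nxt (n + 1) M (Fin.cons x ν : Fin (n + 1) → ℝ) 0 = headNxt n M ν := by
  unfold nxt headNxt
  by_cases h : 0 < n
  · have h' : ((0 : Fin (n + 1)) : ℕ) + 1 < n + 1 := by simpa using h
    rw [dif_pos h', dif_pos h]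
    exact Fin.cons_succ (α := fun _ => ℝ) x ν ⟨0, h⟩
  · have h' : ¬ ((0 : Fin (n + 1)) : ℕ) + 1 < n + 1 := by simpa using h
    rw [dif_neg h', dif_neg h]

lemma nxt_cons_succ (n : ℕ) (M x : ℝ) (ν : Fin n → ℝ) (i : Fin n) :
    nxt (n + 1) M (Fin.cons x ν : Fin (n + 1) → ℝ) i.succ = nxt n M ν i := by
  unfold nxt
  by_cases h : (i : ℕ) + 1 < n
  · have h' : (i.succ : ℕ) + 1 < n + 1 := by simpa using h
    rw [dif_pos h', dif_pos h]
    exact Fin.cons_succ (α := fun _ => ℝ) x ν ⟨i + 1, h⟩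
  · have h' : ¬ (i.succ : ℕ) + 1 < n + 1 := by simpa using h
    rw [dif_neg h', dif_neg h]

lemma cons_mem_qBox (n : ℕ) (M x : ℝ) (c d : Fin (n + 1) → ℝ) (ν : Fin n → ℝ) :
    (Fin.cons x ν : Fin (n + 1) → ℝ) ∈ qBox (n + 1) M c d ↔
      x ∈ Set.Ioc (headNxt n M ν * c 0) (headNxt n M ν * d 0) ∧
        ν ∈ qBox n M (fun i => c i.succ) (fun i => d i.succ) := by
  simp only [qBox, Set.mem_ofPred_eq, Fin.forall_fin_succ, nxt_cons_zero, nxt_cons_succ,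
    Fin.cons_zero, Fin.cons_succ, Set.mem_Ioc]

lemma headNxt_pos (n : ℕ) (M : ℝ) (hM : 0 < M) (ν : Fin n → ℝ) (h : ∀ i, 0 < ν i) :
    0 < headNxt n M ν := by
  unfold headNxt
  split_ifs
  · exact h _
  · positivity

lemma qBox_pos (M : ℝ) (hM : 0 < M) (n : ℕ) : ∀ (c d : Fin n → ℝ), (∀ i, 0 < c i) →
    ∀ ν ∈ qBox n M c d, ∀ i, 0 < ν i := by
  induction n with
  | zero => intro c d _ ν _ i; exact i.elim0
  | succ n ih =>
    intro c d hc ν hν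
    obtain ⟨x, ν', rfl⟩ : ∃ (x : ℝ) (ν' : Fin n → ℝ), ν = Fin.cons x ν' :=
      ⟨ν 0, Fin.tail ν, (Fin.cons_self_tail ν).symm⟩
    rw [cons_mem_qBox] at hν
    have h' := ih _ _ (fun i => hc i.succ) ν' hν.2
    have := mul_pos (headNxt_pos n M hM ν' h') (hc 0)
    refine Fin.cases ?_ ?_
    · simpa using this.trans hν.1.1
    · simpa using h'

/-- If the bounds satisfy `c i = d i * s`, each ratio `ν i / ν (i+1)` is fixed up to a factor `s`,
so any two points of the box agree up to a factor `s ^ n` in each coordinate. -/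
lemma qBox_close (M s : ℝ) (hM : 0 < M) (hs : 0 < s) (hs1 : s ≤ 1) (n : ℕ) :
    ∀ (c d : Fin n → ℝ), (∀ i, 0 < d i) → (∀ i, c i = d i * s) →
    ∀ u ∈ qBox n M c d, ∀ v ∈ qBox n M c d, ∀ i, s ^ n * u i ≤ v i := by
  induction n with
  | zero => intro c d _ _ u _ v _ i; exact i.elim0
  | succ n ih =>
    intro c d hd hcd u hu v hv
    obtain ⟨x, u', rfl⟩ : ∃ (x : ℝ) (ν' : Fin n → ℝ), u = Fin.cons x ν' :=
      ⟨u 0, Fin.tail u, (Fin.cons_self_tail u).symm⟩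
    obtain ⟨y, v', rfl⟩ : ∃ (x : ℝ) (ν' : Fin n → ℝ), v = Fin.cons x ν' :=
      ⟨v 0, Fin.tail v, (Fin.cons_self_tail v).symm⟩
    rw [cons_mem_qBox] at hu hv
    have h' := ih _ _ (fun i => hd i.succ) (fun i => hcd i.succ) u' hu.2 v' hv.2
    have hu' := qBox_pos M hM n _ _
      (fun i => by rw [hcd]; exact mul_pos (hd _) hs) u' hu.2
    have hh : s ^ n * headNxt n M u' ≤ headNxt n M v' := by
      unfold headNxt
      split_ifs
      · exact h' _
      · exact mul_le_of_le_one_left (by positivity) (pow_le_one₀ hs.le hs1)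
    refine Fin.cases ?_ (fun i => ?_)
    · simp only [Fin.cons_zero]
      calc s ^ (n + 1) * x ≤ s ^ (n + 1) * (headNxt n M u' * d 0) := by
            gcongr; exact hu.1.2
        _ = (s ^ n * headNxt n M u') * (d 0 * s) := by ring
        _ ≤ headNxt n M v' * (d 0 * s) := by
            have := mul_pos (hd 0) hs
            gcongr
        _ ≤ y := by rw [← hcd]; exact hv.1.1.le
    · simp only [Fin.cons_succ]
      refine le_trans ?_ (h' i)
      have := (hu' i).le
      gcongr ?_ * _
      exact pow_le_pow_of_le_one hs.le hs1 (Nat.le_succ n)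

lemma measurable_nxt (n : ℕ) (M : ℝ) (i : Fin n) :
    Measurable (fun ν : Fin n → ℝ => nxt n M ν i) := by
  unfold nxt
  split_ifs
  · exact measurable_pi_apply _
  · exact measurable_const

lemma measurableSet_qBox (n : ℕ) (M : ℝ) (c d : Fin n → ℝ) : MeasurableSet (qBox n M c d) := by
  unfold qBox
  rw [Set.ofPred_forall]
  refine MeasurableSet.iInter fun i => ?_
  exact (measurableSet_lt ((measurable_nxt n M i).mul_const _) (measurable_pi_apply i)).inter
    (measurableSet_le (measurable_pi_apply i) ((measurable_nxt n M i).mul_const _))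

lemma lintegral_Ioc_inv (a b : ℝ) (ha : 0 < a) (hab : a ≤ b) :
    ∫⁻ x in Set.Ioc a b, ENNReal.ofReal x⁻¹ = ENNReal.ofReal (Real.log (b / a)) := by
  have hb := ha.trans_le hab
  rw [← integral_inv_of_pos ha hb, intervalIntegral.integral_of_le hab,
    ofReal_integral_eq_lintegral_ofReal]
  · have : IntervalIntegrable (fun x : ℝ => x⁻¹) volume a b := by
      refine intervalIntegral.intervalIntegrable_inv (fun x hx => ?_) continuousOn_id
      rw [Set.uIcc_of_le hab] at hx
      exact (ha.trans_le hx.1).ne'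
    exact (intervalIntegrable_iff_integrableOn_Ioc_of_le hab).1 this
  · filter_upwards [ae_restrict_mem measurableSet_Ioc] with x hx
    exact inv_nonneg.2 (ha.trans hx.1).le

/-- The multiplicative Haar mass of the box is the product of the logarithmic side lengths. -/
lemma lintegral_qBox (M : ℝ) (hM : 0 < M) (n : ℕ) : ∀ (c d : Fin n → ℝ), (∀ i, 0 < c i) →
    (∀ i, c i ≤ d i) →
    ∫⁻ ν in qBox n M c d, ∏ i, ENNReal.ofReal (ν i)⁻¹ =
      ∏ i, ENNReal.ofReal (Real.log (d i / c i)) := by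
  induction n with
  | zero =>
    intro c d _ _
    have : qBox 0 M c d = Set.univ := Set.eq_univ_of_forall fun ν i => i.elim0
    simp [this, volume_pi]
  | succ n ih =>
    intro c d hc hcd
    have hW : ∀ m : ℕ, Measurable (fun ν : Fin m → ℝ => ∏ i, ENNReal.ofReal (ν i)⁻¹) := by
      intro m
      exact Finset.measurable_fun_prod _ fun i _ => ((measurable_pi_apply i).inv).ennreal_ofReal
    have hF : Measurable ((qBox (n + 1) M c d).indicator
        (fun ν : Fin (n + 1) → ℝ => ∏ i, ENNReal.ofReal (ν i)⁻¹)) :=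
      (hW _).indicator (measurableSet_qBox _ _ _ _)
    have hmp := (volume_preserving_piFinSuccAbove (fun _ : Fin (n + 1) => ℝ) 0).symm
    rw [← lintegral_indicator (measurableSet_qBox _ _ _ _), ← hmp.lintegral_comp hF,
      Measure.volume_eq_prod]
    refine (lintegral_prod_symm' _ (hF.comp hmp.measurable)).trans ?_
    simp only [Function.comp_apply]
    rw [Fin.prod_univ_succ, ← ih _ _ (fun i => hc i.succ) (fun i => hcd i.succ),
      ← lintegral_const_mul _ (hW n), ← lintegral_indicator (measurableSet_qBox _ _ _ _)]
    refine lintegral_congr fun ν => ?_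
    have hcons : ∀ x : ℝ, (MeasurableEquiv.piFinSuccAbove (fun _ : Fin (n + 1) => ℝ) 0).symm (x, ν)
        = (Fin.cons x ν : Fin (n + 1) → ℝ) := by
      intro x
      simp [MeasurableEquiv.piFinSuccAbove, Fin.insertNthEquiv]
    simp only [hcons]
    by_cases hν : ν ∈ qBox n M (fun i => c i.succ) (fun i => d i.succ)
    · have hpos := headNxt_pos n M hM ν (qBox_pos M hM n _ _ (fun i => hc i.succ) ν hν)
      rw [Set.indicator_of_mem hν]
      have h1 := lintegral_Ioc_inv (headNxt n M ν * c 0) (headNxt n M ν * d 0)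
        (mul_pos hpos (hc 0)) (by have := hcd 0; gcongr)
      rw [mul_div_mul_left _ _ hpos.ne'] at h1
      rw [← h1, ← lintegral_mul_const _ (measurable_inv.ennreal_ofReal),
        ← lintegral_indicator measurableSet_Ioc]
      refine lintegral_congr fun x => ?_
      by_cases hx : x ∈ Set.Ioc (headNxt n M ν * c 0) (headNxt n M ν * d 0)
      · rw [Set.indicator_of_mem hx, Set.indicator_of_mem ((cons_mem_qBox ..).2 ⟨hx, hν⟩),
          Fin.prod_univ_succ]
        simp
      · rw [Set.indicator_of_notMem hx,
          Set.indicator_of_notMem (fun h => hx ((cons_mem_qBox ..).1 h).1)]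
    · rw [Set.indicator_of_notMem hν]
      refine (lintegral_congr fun x => ?_).trans lintegral_zero
      exact Set.indicator_of_notMem (fun h => hν ((cons_mem_qBox ..).1 h).2) _

lemma Bq_eq_qBox (n : ℕ) (M q : ℝ) (μ : Fin n → ℝ) :
    Bq n M q μ = qBox n M (fun i => q ^ (2 * lab n M q μ i + 2))
      (fun i => q ^ (2 * lab n M q μ i)) := rfl

lemma mem_Bq_self (n : ℕ) (M q : ℝ) (hM : 0 < M) (hq : 0 < q) (hq1 : q < 1) (μ : Fin n → ℝ)
    (hpos : ∀ i, 0 < μ i) : μ ∈ Bq n M q μ := by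
  intro i
  have hn : 0 < nxt n M μ i := by
    unfold nxt
    split_ifs
    · exact hpos _
    · positivity
  have hr : 0 < μ i / nxt n M μ i := div_pos (hpos i) hn
  have hq2 : 0 < q ^ 2 := by positivity
  have hq21 : q ^ 2 < 1 := pow_lt_one₀ hq.le hq1 two_ne_zero
  have e1 : q ^ (2 * lab n M q μ i) = (q ^ 2 : ℝ) ^ (lab n M q μ i : ℝ) := by
    rw [Real.rpow_intCast, zpow_mul]; norm_cast
  have e2 : q ^ (2 * lab n M q μ i + 2) = (q ^ 2 : ℝ) ^ (lab n M q μ i + 1 : ℝ) := by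
    rw [show 2 * lab n M q μ i + 2 = 2 * (lab n M q μ i + 1) by ring, zpow_mul,
      show (lab n M q μ i + 1 : ℝ) = ((lab n M q μ i + 1 : ℤ) : ℝ) by push_cast; rfl,
      Real.rpow_intCast]
    norm_cast
  rw [e1, e2, mul_comm, ← lt_div_iff₀ hn, mul_comm (nxt n M μ i), ← div_le_iff₀ hn]
  constructor
  · rw [← Real.logb_lt_iff_lt_rpow_of_base_lt_one hq2 hq21 hr]
    exact Int.lt_floor_add_one _
  · rw [← Real.le_logb_iff_rpow_le_of_base_lt_one hq2 hq21 hr]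
    exact Int.floor_le _

/-- The `q`-boxes shrink to `μ` as `q → 1⁻`. -/
lemma eventually_Bq_subset (n : ℕ) (M : ℝ) (hM : 0 < M) (μ : Fin n → ℝ) (hpos : ∀ i, 0 < μ i)
    (U : Set (Fin n → ℝ)) (hU : U ∈ nhds μ) :
    ∀ᶠ q in nhdsWithin (1 : ℝ) (Set.Ioo 0 1), Bq n M q μ ⊆ U := by
  obtain ⟨δ, hδ, hball⟩ := Metric.mem_nhds_iff.1 hU
  have hlo : ∀ i, ∀ᶠ q in nhdsWithin (1 : ℝ) (Set.Ioo 0 1), μ i - δ < (q ^ 2) ^ n * μ i := by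
    intro i
    have : Filter.Tendsto (fun q : ℝ => (q ^ 2) ^ n * μ i) (nhds 1) (nhds (μ i)) := by
      have : Continuous (fun q : ℝ => (q ^ 2) ^ n * μ i) := by fun_prop
      simpa using this.tendsto 1
    exact (this.mono_left nhdsWithin_le_nhds).eventually (lt_mem_nhds (by linarith))
  have hhi : ∀ i, ∀ᶠ q in nhdsWithin (1 : ℝ) (Set.Ioo 0 1), μ i < (q ^ 2) ^ n * (μ i + δ) := by
    intro i
    have : Filter.Tendsto (fun q : ℝ => (q ^ 2) ^ n * (μ i + δ)) (nhds 1) (nhds (μ i + δ)) := by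
      have : Continuous (fun q : ℝ => (q ^ 2) ^ n * (μ i + δ)) := by fun_prop
      simpa using this.tendsto 1
    exact (this.mono_left nhdsWithin_le_nhds).eventually (lt_mem_nhds (by linarith))
  filter_upwards [self_mem_nhdsWithin, Filter.eventually_all.2 hlo, Filter.eventually_all.2 hhi]
    with q hq h1 h2 ν hν
  have hq2 : 0 < q ^ 2 := pow_pos hq.1 2
  have hμ := mem_Bq_self n M q hM hq.1 hq.2 μ hpos
  rw [Bq_eq_qBox] at hν hμ
  have hclose := qBox_close M (q ^ 2) hM hq2 (pow_lt_one₀ hq.1.le hq.2 two_ne_zero).le n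
    (fun i => q ^ (2 * lab n M q μ i + 2)) (fun i => q ^ (2 * lab n M q μ i))
    (fun i => zpow_pos hq.1 (2 * lab n M q μ i))
    (fun i => by rw [zpow_add₀ hq.1.ne']; norm_cast)
  refine hball ?_
  rw [Metric.mem_ball, dist_pi_lt_iff hδ]
  intro i
  rw [Real.dist_eq, abs_lt]
  have a1 := hclose _ hμ _ hν i
  have a2 := hclose _ hν _ hμ i
  have a3 : ν i < μ i + δ := lt_of_mul_lt_mul_left (a2.trans_lt (h2 i)) (by positivity)
  constructor <;> linarith [h1 i]

lemma tendsto_log_ratio :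
    Filter.Tendsto (fun q : ℝ => (-2 * Real.log q) / (q ^ (-2 : ℤ) - 1))
      (nhdsWithin 1 (Set.Ioo 0 1)) (nhds 1) := by
  have h := (hasDerivAt_iff_tendsto_slope.1 (Real.hasDerivAt_log one_ne_zero))
  have h2 : Filter.Tendsto (fun q : ℝ => q ^ (-2 : ℤ)) (nhdsWithin 1 (Set.Ioo 0 1))
      (nhdsWithin 1 {1}ᶜ) := by
    refine tendsto_nhdsWithin_iff.2 ⟨?_, ?_⟩
    · have : ContinuousAt (fun q : ℝ => q ^ (-2 : ℤ)) 1 :=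
        continuousAt_zpow₀ _ _ (Or.inl one_ne_zero)
      have := this.tendsto
      rw [one_zpow] at this
      exact this.mono_left nhdsWithin_le_nhds
    · filter_upwards [self_mem_nhdsWithin] with q hq
      exact (one_lt_zpow_of_neg₀ hq.1 hq.2 (by norm_num)).ne'
  have h3 := h.comp h2
  rw [inv_one] at h3
  refine h3.congr fun q => ?_
  simp [slope_def_field]

/-- Delta convergence of the rescaled q-lattice eigenvectors of the
singlet representation of `U_q(e^{2n})`: for `0 < μ₁ ≤ … ≤ μₙ ≤ M²` and `f` continuous
on `(0,∞)ⁿ`, the limit as `q → 1⁻` of `α(q,μ) ∫_{B_q} α(q,ν) f(ν) dν` equals `f(μ)`. -/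
theorem delta_convergence_multi_dim
    (n : ℕ) (hn : 1 ≤ n) (M : ℝ) (hM : 0 < M)
    (μ : Fin n → ℝ) (hpos : ∀ i, 0 < μ i) (hmono : Monotone μ)
    (htop : ∀ i, μ i ≤ M ^ 2)
    (f : (Fin n → ℝ) → ℝ) (hf : ContinuousOn f {ν | ∀ i, 0 < ν i}) :
    Filter.Tendsto
      (fun q : ℝ => alph n q μ * ∫ ν in Bq n M q μ, alph n q ν * f ν)
      (nhdsWithin 1 (Set.Ioo 0 1)) (nhds (f μ)) := by
  set P : Set (Fin n → ℝ) := {ν | ∀ i, 0 < ν i} with hP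
  have hPo : IsOpen P := by
    rw [hP, Set.ofPred_forall]
    exact isOpen_iInter_of_finite fun i => isOpen_lt continuous_const (continuous_apply i)
  set h : (Fin n → ℝ) → ℝ := fun ν => f ν * ∏ i, Real.sqrt (ν i / μ i) with hh
  set w : (Fin n → ℝ) → ℝ := fun ν => ∏ i, (ν i)⁻¹ with hw
  have hhc : ContinuousOn h P := hf.mul (Continuous.continuousOn (by fun_prop))
  have hhμ : h μ = f μ := by
    simp [hh, div_self (hpos _).ne']
  have hBm : ∀ q, MeasurableSet (Bq n M q μ) := fun q => measurableSet_qBox _ _ _ _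
  have hBP : ∀ q ∈ Set.Ioo (0 : ℝ) 1, Bq n M q μ ⊆ P := fun q hq =>
    qBox_pos M hM n _ _ (fun i => zpow_pos hq.1 _)
  have hwm : Measurable w := by
    exact Finset.measurable_fun_prod _ fun i _ => (measurable_pi_apply i).inv
  have hlint : ∀ q ∈ Set.Ioo (0 : ℝ) 1,
      ∫⁻ ν in Bq n M q μ, ENNReal.ofReal (w ν) = ENNReal.ofReal ((-2 * Real.log q) ^ n) := by
    intro q hq
    have h1 := lintegral_qBox M hM n (fun i => q ^ (2 * lab n M q μ i + 2))
      (fun i => q ^ (2 * lab n M q μ i)) (fun i => zpow_pos hq.1 _)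
      (fun i => zpow_le_zpow_right_of_le_one₀ hq.1 hq.2.le (by omega))
    have h2 : ∀ i : Fin n, Real.log (q ^ (2 * lab n M q μ i) / q ^ (2 * lab n M q μ i + 2)) =
        -2 * Real.log q := by
      intro i
      rw [← zpow_sub₀ hq.1.ne', Real.log_zpow]
      push_cast
      ring
    simp only [h2, Finset.prod_const, Finset.card_univ, Fintype.card_fin] at h1
    rw [ENNReal.ofReal_pow (by linarith [Real.log_neg hq.1 hq.2]), ← h1]
    refine setLIntegral_congr_fun (hBm q) fun ν hν => ?_
    exact ENNReal.ofReal_prod_of_nonneg fun i _ => inv_nonneg.2 (hBP q hq hν i).le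
  have hw0 : ∀ q ∈ Set.Ioo (0 : ℝ) 1, 0 ≤ᵐ[volume.restrict (Bq n M q μ)] w := by
    intro q hq
    filter_upwards [ae_restrict_mem (hBm q)] with ν hν
    exact Finset.prod_nonneg fun i _ => inv_nonneg.2 (hBP q hq hν i).le
  have hwi : ∀ q ∈ Set.Ioo (0 : ℝ) 1, IntegrableOn w (Bq n M q μ) := by
    intro q hq
    refine ⟨hwm.aestronglyMeasurable, ?_⟩
    rw [hasFiniteIntegral_iff_ofReal (hw0 q hq), hlint q hq]
    exact ENNReal.ofReal_lt_top
  have hwint : ∀ q ∈ Set.Ioo (0 : ℝ) 1, ∫ ν in Bq n M q μ, w ν = (-2 * Real.log q) ^ n := by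
    intro q hq
    rw [integral_eq_lintegral_of_nonneg_ae (hw0 q hq) hwm.aestronglyMeasurable, hlint q hq,
      ENNReal.toReal_ofReal]
    exact pow_nonneg (by linarith [Real.log_neg hq.1 hq.2]) _
  -- Rewriting in terms of the multiplicative Haar weight, using `(√ν √μ)⁻¹ = √(ν / μ) ν⁻¹`.
  have hrew : ∀ q ∈ Set.Ioo (0 : ℝ) 1,
      alph n q μ * ∫ ν in Bq n M q μ, alph n q ν * f ν =
        (∫ ν in Bq n M q μ, h ν * w ν) / (-2 * Real.log q) ^ n *
          ((-2 * Real.log q) / (q ^ (-2 : ℤ) - 1)) ^ n := by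
    intro q hq
    have hL : 0 < -2 * Real.log q := by linarith [Real.log_neg hq.1 hq.2]
    have hk : 0 < q ^ (-2 : ℤ) - 1 := by
      linarith [one_lt_zpow_of_neg₀ hq.1 hq.2 (show (-2 : ℤ) < 0 by norm_num)]
    set k := q ^ (-2 : ℤ) - 1 with hkdef
    have e : ∀ ν ∈ Bq n M q μ, alph n q μ * (alph n q ν * f ν) = (k⁻¹) ^ n * (h ν * w ν) := by
      intro ν hν
      have hν' := hBP q hq hν
      have : alph n q μ * alph n q ν = (k⁻¹) ^ n * ((∏ i, Real.sqrt (ν i / μ i)) * w ν) := by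
        rw [alph, alph, hw, ← Finset.prod_mul_distrib, ← Finset.prod_mul_distrib,
          show (k⁻¹) ^ n = ∏ _i : Fin n, k⁻¹ by simp, ← Finset.prod_mul_distrib]
        refine Finset.prod_congr rfl fun i _ => ?_
        rw [← hkdef, Real.sqrt_mul (hpos i).le, Real.sqrt_mul (hν' i).le,
          Real.sqrt_div (hν' i).le]
        have s1 := Real.sqrt_pos.2 (hpos i)
        have s2 := Real.sqrt_pos.2 (hν' i)
        have s3 := Real.sqrt_pos.2 hk
        have t2 := Real.sq_sqrt (hν' i).le
        have t3 := Real.sq_sqrt hk.le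
        have hνi := hν' i
        rw [show k⁻¹ = (Real.sqrt k ^ 2)⁻¹ by rw [t3],
          show (ν i)⁻¹ = (Real.sqrt (ν i) ^ 2)⁻¹ by rw [t2]]
        field_simp
      rw [← mul_assoc, this, hh]
      ring
    rw [← integral_const_mul, setIntegral_congr_fun (hBm q) e, integral_const_mul, div_pow,
      inv_pow]
    have hL' := (pow_pos hL n).ne'
    generalize (-2 * Real.log q) ^ n = A at hL' ⊢
    field_simp
  have hmain : Filter.Tendsto
      (fun q : ℝ => (∫ ν in Bq n M q μ, h ν * w ν) / (-2 * Real.log q) ^ n)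
      (nhdsWithin 1 (Set.Ioo 0 1)) (nhds (h μ)) := by
    rw [Metric.tendsto_nhds]
    intro ε hε
    have hcont : ContinuousAt h μ := hhc.continuousAt (hPo.mem_nhds hpos)
    have hU : {ν | dist (h ν) (h μ) < ε / 2} ∈ nhds μ :=
      Metric.tendsto_nhds.1 hcont (ε / 2) (half_pos hε)
    filter_upwards [self_mem_nhdsWithin, eventually_Bq_subset n M hM μ hpos _ hU] with q hq hsub
    have hL : 0 < (-2 * Real.log q) ^ n := pow_pos (by linarith [Real.log_neg hq.1 hq.2]) n
    have hdiff : ∀ ν ∈ Bq n M q μ, |h ν - h μ| ≤ ε / 2 := fun ν hν => by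
      have : dist (h ν) (h μ) < ε / 2 := hsub hν
      rw [Real.dist_eq] at this
      exact this.le
    have hdm : AEStronglyMeasurable (fun ν => h ν - h μ) (volume.restrict (Bq n M q μ)) :=
      ((hhc.mono (hBP q hq)).sub continuousOn_const).aestronglyMeasurable (hBm q)
    have hdi : Integrable (fun ν => (h ν - h μ) * w ν) (volume.restrict (Bq n M q μ)) := by
      refine (hwi q hq).bdd_mul (c := ε / 2) hdm ?_
      filter_upwards [ae_restrict_mem (hBm q)] with ν hν
      exact hdiff ν hν
    have hsplit : ∫ ν in Bq n M q μ, h ν * w ν =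
        (∫ ν in Bq n M q μ, (h ν - h μ) * w ν) + h μ * (-2 * Real.log q) ^ n := by
      rw [← hwint q hq, ← integral_const_mul, ← integral_add hdi ((hwi q hq).const_mul _)]
      refine integral_congr_ae (Filter.Eventually.of_forall fun ν => ?_)
      simp only
      ring
    have hbound : |∫ ν in Bq n M q μ, (h ν - h μ) * w ν| ≤ ε / 2 * (-2 * Real.log q) ^ n := by
      rw [← hwint q hq, ← integral_const_mul, ← Real.norm_eq_abs]
      refine norm_integral_le_of_norm_le ((hwi q hq).const_mul _) ?_
      filter_upwards [ae_restrict_mem (hBm q), hw0 q hq] with ν hν h0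
      rw [norm_mul, Real.norm_eq_abs, Real.norm_of_nonneg h0]
      exact mul_le_mul_of_nonneg_right (hdiff ν hν) h0
    rw [Real.dist_eq, hsplit, add_div, mul_div_cancel_right₀ _ hL.ne', add_sub_cancel_right,
      abs_div, abs_of_pos hL, div_lt_iff₀ hL]
    refine hbound.trans_lt ?_
    gcongr
    linarith
  have hlim := hmain.mul (tendsto_log_ratio.pow n)
  rw [one_pow, mul_one, hhμ] at hlim
  refine hlim.congr' ?_
  filter_upwards [self_mem_nhdsWithin] with q hq
  exact (hrew q hq).symm
end
end
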